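/- Fix d ≥ 1 and real numbers 0 < s < t, set c_r := e^{−r}, σ_r² := 1 − e^{−2r}, let F be a nonempty finite subset of ℝ^d, and let μ be a probability mass function on F. Define p_t(y) := Σ_{x_0∈F} μ(x_0)·φ_d(y; c_t·x_0, σ_t²) and similarly p_s. Then for every z ∈ ℝ^d, ∫_{ℝ^d} Σ_{x_0∈F} μ(x_0) · φ_d(y; c_t·x_0, σ_t²) · φ_d( z; (sinh(t−s)/sinh(t))·x_0 + (sinh(s)/sinh(t))·y, 2·sinh(s)·sinh(t−s)/sinh(t) ) dy = p_s(z). That is, the exact posterior-predictive reverse kernel K⋆(z | y) := p_t(y)^{−1}·Σ_{x_0} μ(x_0)·φ_d(y; c_t x_0, σ_t²)·φ_d(z; bridge mean, bridge variance), which mixes Ornstein–Uhlenbeck bridges over the true clean-endpoint posterior, transports the time-t marginal density p_t exactly to the time-s marginal density p_s. -/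

import Mathlib

/-!
For a fixed clean endpoint `x₀` the integral is the convolution of a Gaussian prior in `y` with a
Gaussian likelihood in `z` whose mean is affine in `y`. Completing the square
(`gaussDensity_mul_gaussDensity`) factors the integrand as (marginal density of `z`) times
(posterior density of `y`), and the latter integrates to one. The marginal has mean `a + b m` and
variance `v + b² u`; with the Ornstein–Uhlenbeck bridge parameters both reduce to `c_s x₀` and
`σ_s²` through the identity `sinh (t - s) + e^{-t} sinh s = e^{-s} sinh t`.
-/

open Real MeasureTheory

/-- Density `φ_d(x; m, v) = (2πv)^{−d/2} exp(−‖x−m‖²/(2v))` of the isotropic Gaussian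
`N(m, v·I_d)` on `ℝ^d`. -/
noncomputable def gaussDensity (d : ℕ) (x m : EuclideanSpace ℝ (Fin d)) (v : ℝ) : ℝ :=
  (2 * Real.pi * v) ^ (-(d : ℝ) / 2) * Real.exp (-‖x - m‖ ^ 2 / (2 * v))

theorem integral_gaussDensity (d : ℕ) (m : EuclideanSpace ℝ (Fin d)) {v : ℝ} (hv : 0 < v) :
    ∫ y, gaussDensity d y m v = 1 := by
  unfold gaussDensity
  rw [integral_const_mul,
    integral_sub_right_eq_self
      (fun y : EuclideanSpace ℝ (Fin d) => Real.exp (-‖y‖ ^ 2 / (2 * v))) m]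
  have h := GaussianFourier.integral_rexp_neg_mul_sq_norm (V := EuclideanSpace ℝ (Fin d))
    (b := 1 / (2 * v)) (by positivity)
  have e : ∀ y : EuclideanSpace ℝ (Fin d),
      Real.exp (-‖y‖ ^ 2 / (2 * v)) = Real.exp (-(1 / (2 * v)) * ‖y‖ ^ 2) := fun y => by
    congr 1; ring
  simp_rw [e]
  rw [h, finrank_euclideanSpace_fin, show π / (1 / (2 * v)) = 2 * π * v by field_simp,
    ← Real.rpow_add (by positivity), show -(d : ℝ) / 2 + d / 2 = 0 by ring, Real.rpow_zero]

theorem integrable_gaussDensity (d : ℕ) (m : EuclideanSpace ℝ (Fin d)) {v : ℝ} (hv : 0 < v) :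
    Integrable (fun y => gaussDensity d y m v) := by
  -- a non-integrable function would have integral `0` by convention
  by_contra h
  have h1 := integral_gaussDensity d m hv
  rw [integral_undef h] at h1
  exact zero_ne_one h1

/-- Bayes rule for a Gaussian prior `N(m, u)` on `y` and a linear Gaussian observation
`z ~ N(a + b y, v)`: prior times likelihood equals marginal times posterior. -/
theorem gaussDensity_mul_gaussDensity (d : ℕ) (y z m a : EuclideanSpace ℝ (Fin d)) (b : ℝ)
    {u v : ℝ} (hu : 0 < u) (hv : 0 < v) :
    gaussDensity d y m u * gaussDensity d z (a + b • y) v =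
      gaussDensity d z (a + b • m) (v + b ^ 2 * u) *
        gaussDensity d y (m + (b * u / (v + b ^ 2 * u)) • (z - (a + b • m)))
          (u * v / (v + b ^ 2 * u)) := by
  obtain ⟨w, hw⟩ : ∃ w, w = v + b ^ 2 * u := ⟨_, rfl⟩
  have hw0 : 0 < w := by rw [hw]; positivity
  rw [← hw]
  unfold gaussDensity
  rw [mul_mul_mul_comm, mul_mul_mul_comm ((2 * π * w) ^ _), ← Real.exp_add, ← Real.exp_add,
    ← Real.mul_rpow (by positivity) (by positivity),
    ← Real.mul_rpow (by positivity) (by positivity)]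
  congr 2
  · field_simp
  -- both exponents are quadratic forms in the residuals `p = y - m` and `q = z - (a + b m)`
  · obtain ⟨p, hp⟩ : ∃ p, p = y - m := ⟨_, rfl⟩
    obtain ⟨q, hq⟩ : ∃ q, q = z - (a + b • m) := ⟨_, rfl⟩
    have e1 : z - (a + b • y) = q - b • p := by rw [hp, hq]; module
    have e2 : y - (m + (b * u / w) • q) = p - (b * u / w) • q := by rw [hp]; module
    rw [← hq, e1, e2, ← hp, norm_sub_sq_real, norm_sub_sq_real, norm_smul, norm_smul,
      inner_smul_right, inner_smul_right, real_inner_comm, mul_pow, mul_pow, Real.norm_eq_abs,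
      Real.norm_eq_abs, sq_abs, sq_abs]
    field_simp
    rw [hw]
    ring

theorem integrable_gaussDensity_mul (d : ℕ) (z m a : EuclideanSpace ℝ (Fin d)) (b : ℝ)
    {u v : ℝ} (hu : 0 < u) (hv : 0 < v) :
    Integrable (fun y => gaussDensity d y m u * gaussDensity d z (a + b • y) v) := by
  simp_rw [gaussDensity_mul_gaussDensity d _ z m a b hu hv]
  exact (integrable_gaussDensity d _ (by positivity)).const_mul _

theorem integral_gaussDensity_mul (d : ℕ) (z m a : EuclideanSpace ℝ (Fin d)) (b : ℝ)
    {u v : ℝ} (hu : 0 < u) (hv : 0 < v) :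
    ∫ y, gaussDensity d y m u * gaussDensity d z (a + b • y) v =
      gaussDensity d z (a + b • m) (v + b ^ 2 * u) := by
  simp_rw [gaussDensity_mul_gaussDensity d _ z m a b hu hv]
  rw [integral_const_mul, integral_gaussDensity d _ (by positivity), mul_one]

theorem sinh_sub_add_exp_mul_sinh (s t : ℝ) :
    Real.sinh (t - s) + Real.exp (-t) * Real.sinh s = Real.exp (-s) * Real.sinh t := by
  rw [Real.sinh_eq, Real.sinh_eq, Real.sinh_eq, show -(t - s) = -t + s by ring,
    show t - s = t + -s by ring, Real.exp_add, Real.exp_add]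
  ring

theorem one_sub_exp_eq (r : ℝ) :
    1 - Real.exp (-(2 * r)) = 2 * Real.exp (-r) * Real.sinh r := by
  have h : Real.exp (-r) * Real.exp r = 1 := by rw [← Real.exp_add]; simp
  rw [show -(2 * r) = -r + -r by ring, Real.exp_add, Real.sinh_eq]
  linear_combination -h

/-- The exact posterior-predictive reverse kernel (mixture of OU bridges
over the true clean-endpoint posterior) transports the time-`t` marginal density
`p_t(y) = Σ_{x₀∈F} μ(x₀) φ_d(y; c_t x₀, σ_t²)` exactly to the time-`s` marginal `p_s`:
for every `z`,
`∫ Σ_{x₀∈F} μ(x₀) φ_d(y; c_t x₀, σ_t²) φ_d(z; (sinh(t−s)/sinh t) x₀ + (sinh s/sinh t) y,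
  2 sinh s sinh(t−s)/sinh t) dy = p_s(z)`. -/
theorem stmt13 {d : ℕ} (hd : 1 ≤ d) (s t : ℝ) (hs : 0 < s) (hst : s < t)
    (F : Finset (EuclideanSpace ℝ (Fin d))) (hF : F.Nonempty)
    (μ : EuclideanSpace ℝ (Fin d) → ℝ)
    (hμ0 : ∀ x ∈ F, 0 ≤ μ x) (hμ1 : ∑ x ∈ F, μ x = 1)
    (z : EuclideanSpace ℝ (Fin d)) :
    (∫ y : EuclideanSpace ℝ (Fin d),
        ∑ x0 ∈ F, μ x0 * gaussDensity d y (Real.exp (-t) • x0) (1 - Real.exp (-(2 * t))) *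
          gaussDensity d z
            ((Real.sinh (t - s) / Real.sinh t) • x0 + (Real.sinh s / Real.sinh t) • y)
            (2 * Real.sinh s * Real.sinh (t - s) / Real.sinh t))
      = ∑ x0 ∈ F, μ x0 * gaussDensity d z (Real.exp (-s) • x0) (1 - Real.exp (-(2 * s))) := by
  have ht := hs.trans hst
  have hS : 0 < Real.sinh s := Real.sinh_pos_iff.2 hs
  have hT : 0 < Real.sinh t := Real.sinh_pos_iff.2 ht
  have hD : 0 < Real.sinh (t - s) := Real.sinh_pos_iff.2 (sub_pos.2 hst)
  have hu : 0 < 1 - Real.exp (-(2 * t)) := by rw [one_sub_exp_eq]; positivity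
  have hv : 0 < 2 * Real.sinh s * Real.sinh (t - s) / Real.sinh t := by positivity
  have key := sinh_sub_add_exp_mul_sinh s t
  simp_rw [mul_assoc (μ _)]
  rw [integral_finsetSum _ fun x0 _ => (integrable_gaussDensity_mul d z _ _ _ hu hv).const_mul _]
  refine Finset.sum_congr rfl fun x0 _ => ?_
  rw [integral_const_mul, integral_gaussDensity_mul d z _ _ _ hu hv]
  have hmean : (Real.sinh (t - s) / Real.sinh t) • x0
      + (Real.sinh s / Real.sinh t) • Real.exp (-t) • x0 = Real.exp (-s) • x0 := by
    rw [smul_smul, ← add_smul]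
    congr 1
    field_simp
    linear_combination key
  have hvar : 2 * Real.sinh s * Real.sinh (t - s) / Real.sinh t
      + (Real.sinh s / Real.sinh t) ^ 2 * (1 - Real.exp (-(2 * t)))
      = 1 - Real.exp (-(2 * s)) := by
    rw [one_sub_exp_eq, one_sub_exp_eq]
    field_simp
    linear_combination key
  rw [hmean, hvar]
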